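/- Fix a subset S ⊆ [n], 0 ≤ τ ≤ 1, and a subset T ⊆ [n] ∖ S; write W = W_S^{≥1−τ} and let A_{−(S∪T)} denote Alice's answers in the coordinates outside S ∪ T. Then E_{(ω, x_T, a_{S∪T}, b_S)} [ D( P_{Y A_{−(S∪T)} | Ω = ω, X_T = x_T, A_{S∪T} = a_{S∪T}, B_S = b_S, W} ∥ P_{Y | Ω = ω} · P_{A_{−(S∪T)} | Ω = ω, X_T = x_T, A_{S∪T} = a_{S∪T}} ) ] ≤ log₂(1/P(W)) + (|S| + |T|)·log₂|𝒜| + |S|·log₂|ℬ|, where the expectation is over (ω, x_T, a_{S∪T}, b_S) drawn from P conditioned on W, and D(· ∥ ·) is the Kullback–Leibler divergence (base 2). -/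

import Mathlib

/-!
Write `K` for the event fixing `Ω`, `X_T`, `A_{S∪T}`, and `E` for the event `K`, `B_S = b_S`, `W`.
Given `Ω = ω`, in each coordinate one of the two questions is fixed, so `X` and `Y` are
independent (`omegaWeight_exchange`); by no-signaling, `(X, A)` and `Y` are independent as well
(`pr_omega_condIndep`). Hence the reference distribution `P_{Y|ω} · P_{A_{-(S∪T)}|K}` at
`(y, a')` equals `P(Y = y, A_{-(S∪T)} = a', K) / P(K)`. Since `E ⊆ K`, the density of the
conditional law given `E` with respect to it is at most `P(K) / P(E)`, and so the divergence is
at most `log₂ (P(K) / P(E))` (`klDiv_le_logb`).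

Averaging over the conditioning values with weights `w = P(E) / P(W)` gives
`log₂ (1 / P(W)) + ∑ w log₂ (P(K) / w)`. The numbers `P(K)` do not depend on `b_S`, so they sum to
`|ℬ|^|S|`, and Gibbs' inequality (`sum_mul_logb_div_le`) bounds the second term by
`|S| log₂ |ℬ|`. The remaining term `(|S| + |T|) log₂ |𝒜|` is nonnegative.
-/

open Finset
open scoped Classical

noncomputable section

/-- Probability of an event under a distribution on a finite type. -/
def pr {Λ : Type*} [Fintype Λ] (P : Λ → ℝ) (E : Λ → Prop) : ℝ :=
  ∑ s, if E s then P s else 0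

/-- Distribution (marginal law) of a random variable `Z` under `P`. -/
def distOf {Λ ζ : Type*} [Fintype Λ] (P : Λ → ℝ) (Z : Λ → ζ) (z : ζ) : ℝ :=
  pr P (fun s => Z s = z)

/-- Conditional distribution of `Z` given the event `E`. -/
def condDist {Λ ζ : Type*} [Fintype Λ] (P : Λ → ℝ) (Z : Λ → ζ) (E : Λ → Prop) (z : ζ) : ℝ :=
  pr P (fun s => Z s = z ∧ E s) / pr P E

/-- Total variation distance between two (finitely supported) distributions. -/
def tvDist {ζ : Type*} [Fintype ζ] (f g : ζ → ℝ) : ℝ :=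
  (∑ z, |f z - g z|) / 2

/-- Kullback–Leibler divergence, base 2. -/
def klDiv {ζ : Type*} [Fintype ζ] (f g : ζ → ℝ) : ℝ :=
  ∑ z, if f z = 0 then 0 else f z * Real.logb 2 (f z / g z)

/-- Shannon mutual information (base 2) of a joint distribution on a product. -/
def mutualInfo {ζ₁ ζ₂ : Type*} [Fintype ζ₁] [Fintype ζ₂] (J : ζ₁ × ζ₂ → ℝ) : ℝ :=
  klDiv J (fun p => (∑ v, J (p.1, v)) * (∑ u, J (u, p.2)))

/-- Sample space for `n` rounds: the questions `x, y`, the answers `a, b`, and the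
dependency-breaking coins `d` (`true` = Alice). -/
abbrev Sample (𝒳 𝒴 𝒜 ℬ : Type*) (n : ℕ) : Type _ :=
  (Fin n → 𝒳) × (Fin n → 𝒴) × (Fin n → 𝒜) × (Fin n → ℬ) × (Fin n → Bool)

namespace Sample

variable {𝒳 𝒴 𝒜 ℬ : Type*} {n : ℕ}

/-- Alice's questions. -/ def x (s : Sample 𝒳 𝒴 𝒜 ℬ n) : Fin n → 𝒳 := s.1
/-- Bob's questions. -/ def y (s : Sample 𝒳 𝒴 𝒜 ℬ n) : Fin n → 𝒴 := s.2.1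
/-- Alice's answers. -/ def a (s : Sample 𝒳 𝒴 𝒜 ℬ n) : Fin n → 𝒜 := s.2.2.1
/-- Bob's answers. -/ def b (s : Sample 𝒳 𝒴 𝒜 ℬ n) : Fin n → ℬ := s.2.2.2.1
/-- The coins `D_i` (`true` = Alice). -/ def d (s : Sample 𝒳 𝒴 𝒜 ℬ n) : Fin n → Bool := s.2.2.2.2

end Sample

variable {𝒳 𝒴 𝒜 ℬ : Type*} [Fintype 𝒳] [Fintype 𝒴] [Fintype 𝒜] [Fintype ℬ] {n : ℕ}

/-- The joint distribution of questions (i.i.d. from `μ`), answers (given by the strategy `q`)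
and the uniform dependency-breaking coins. -/
def jointP (μ : 𝒳 × 𝒴 → ℝ)
    (q : (Fin n → 𝒳) → (Fin n → 𝒴) → (Fin n → 𝒜) × (Fin n → ℬ) → ℝ)
    (s : Sample 𝒳 𝒴 𝒜 ℬ n) : ℝ :=
  (∏ i, μ (s.x i, s.y i)) * q s.x s.y (s.a, s.b) * (1 / 2) ^ n

/-- The event `W_S^{≥ 1-τ}`: at least a `1 - τ` fraction of the coordinates in `S` are won. -/
def winS (V : 𝒳 → 𝒴 → 𝒜 → ℬ → Prop) (S : Finset (Fin n)) (τ : ℝ)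
    (s : Sample 𝒳 𝒴 𝒜 ℬ n) : Prop :=
  (1 - τ) * (S.card : ℝ) ≤ ((S.filter (fun i => V (s.x i) (s.y i) (s.a i) (s.b i))).card : ℝ)

/-- The value space of the dependency-breaking variable `Ω = (Ω_1,…,Ω_n, X_S, Y_S)`;
`Ω_i ∈ 𝒳 ⊕ 𝒴` encodes the pair `(D_i, M_i)`. -/
abbrev OmegaType (𝒳 𝒴 : Type*) {n : ℕ} (S : Finset (Fin n)) : Type _ :=
  (Fin n → 𝒳 ⊕ 𝒴) × ({i : Fin n // i ∈ S} → 𝒳) × ({i : Fin n // i ∈ S} → 𝒴)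

/-- The dependency-breaking random variable `Ω`. -/
def omegaRV (S : Finset (Fin n)) (s : Sample 𝒳 𝒴 𝒜 ℬ n) : OmegaType 𝒳 𝒴 S :=
  (fun i => if s.d i then Sum.inl (s.x i) else Sum.inr (s.y i),
   fun i => s.x i.1, fun i => s.y i.1)

/-- The value space of `Ω_{-j}` (`Ω` with its `j`-th coordinate omitted). -/
abbrev OmegaMinusType (𝒳 𝒴 : Type*) {n : ℕ} (S : Finset (Fin n)) (j : Fin n) : Type _ :=
  ({i : Fin n // i ≠ j} → 𝒳 ⊕ 𝒴) × ({i : Fin n // i ∈ S} → 𝒳) × ({i : Fin n // i ∈ S} → 𝒴)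

/-- The random variable `Ω_{-j}`. -/
def omegaMinusRV (S : Finset (Fin n)) (j : Fin n) (s : Sample 𝒳 𝒴 𝒜 ℬ n) :
    OmegaMinusType 𝒳 𝒴 S j :=
  (fun i => if s.d i.1 then Sum.inl (s.x i.1) else Sum.inr (s.y i.1),
   fun i => s.x i.1, fun i => s.y i.1)

/-- The value space of `R_{Tj} = (Ω_{-j}, X_T, A_{S∪T}, B_S)`. -/
abbrev RType (𝒳 𝒴 𝒜 ℬ : Type*) {n : ℕ} (S T : Finset (Fin n)) (j : Fin n) : Type _ :=
  OmegaMinusType 𝒳 𝒴 S j × ({i : Fin n // i ∈ T} → 𝒳) ×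
    ({i : Fin n // i ∈ S ∪ T} → 𝒜) × ({i : Fin n // i ∈ S} → ℬ)

/-- The random variable `R_{Tj} = (Ω_{-j}, X_T, A_{S∪T}, B_S)`. -/
def rRV (S T : Finset (Fin n)) (j : Fin n) (s : Sample 𝒳 𝒴 𝒜 ℬ n) : RType 𝒳 𝒴 𝒜 ℬ S T j :=
  (omegaMinusRV S j s, fun i => s.x i.1, fun i => s.a i.1, fun i => s.b i.1)


set_option linter.unusedSectionVars false

/-! ### Elementary facts on finite probability -/

section Elementary

variable {Λ : Type*} [Fintype Λ] {P : Λ → ℝ}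

lemma pr_nonneg (hP : ∀ s, 0 ≤ P s) (E : Λ → Prop) : 0 ≤ pr P E :=
  Finset.sum_nonneg fun s _ => by split_ifs <;> simp [hP s]

lemma pr_mono (hP : ∀ s, 0 ≤ P s) {E F : Λ → Prop} (h : ∀ s, E s → F s) : pr P E ≤ pr P F := by
  refine Finset.sum_le_sum fun s _ => ?_
  by_cases hE : E s
  · simp [hE, h s hE]
  · by_cases hF : F s <;> simp [hE, hF, hP s]

lemma pr_congr {E F : Λ → Prop} (h : ∀ s, E s ↔ F s) : pr P E = pr P F := by
  have : E = F := funext fun s => propext (h s)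
  rw [this]

lemma sum_pr_and {ζ : Type*} [Fintype ζ] (Z : Λ → ζ) (E : Λ → Prop) :
    ∑ z, pr P (fun s => Z s = z ∧ E s) = pr P E := by
  unfold pr
  rw [Finset.sum_comm]
  refine Finset.sum_congr rfl fun s _ => ?_
  by_cases hE : E s <;> simp [hE]

lemma sum_pr_eq {ζ : Type*} [Fintype ζ] (Z : Λ → ζ) :
    ∑ z, pr P (fun s => Z s = z) = ∑ s, P s := by
  unfold pr
  rw [Finset.sum_comm]
  simp

/-- If the density of `f` with respect to `g` is at most `c` on the support of `f`, then the
divergence is at most `log₂ c`. -/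
lemma klDiv_le_logb {ζ : Type*} [Fintype ζ] (f g : ζ → ℝ) (c : ℝ) (hf : ∀ z, 0 ≤ f z)
    (hf1 : ∑ z, f z = 1) (h : ∀ z, f z ≠ 0 → 0 < f z / g z ∧ f z / g z ≤ c) :
    klDiv f g ≤ Real.logb 2 c := by
  calc klDiv f g ≤ ∑ z, f z * Real.logb 2 c := by
        refine Finset.sum_le_sum fun z _ => ?_
        split_ifs with hz
        · simp [hz]
        · exact mul_le_mul_of_nonneg_left
            (Real.logb_le_logb_of_le (by norm_num) (h z hz).1 (h z hz).2) (hf z)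
    _ = Real.logb 2 c := by rw [← Finset.sum_mul, hf1, one_mul]

/-- Gibbs' inequality against a subdistribution of total mass `G`. -/
lemma sum_mul_logb_div_le {ι : Type*} [Fintype ι] (w g : ι → ℝ) (G : ℝ) (hG : 0 < G)
    (hw : ∀ p, 0 ≤ w p) (hw1 : ∑ p, w p = 1) (hg : ∀ p, 0 ≤ g p) (hgG : ∑ p, g p ≤ G)
    (hpos : ∀ p, w p ≠ 0 → 0 < g p) :
    ∑ p, w p * Real.logb 2 (g p / w p) ≤ Real.logb 2 G := by
  have h2 : 0 < Real.log 2 := Real.log_pos (by norm_num)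
  have key : ∀ p, w p * Real.log (g p / w p) ≤ w p * Real.log G + (g p / G - w p) := by
    intro p
    rcases (hw p).eq_or_lt with h | h
    · rw [← h]; simp only [zero_mul, sub_zero, zero_add]; exact div_nonneg (hg p) hG.le
    · have hgp := hpos p h.ne'
      have := Real.log_le_sub_one_of_pos (x := g p / w p / G) (by positivity)
      rw [Real.log_div (by positivity) hG.ne'] at this
      have h3 := mul_le_mul_of_nonneg_left this h.le
      have h4 : w p * (g p / w p / G - 1) = g p / G - w p := by field_simp
      rw [h4] at h3
      linarith
  have hsum : ∑ p, w p * Real.log (g p / w p) ≤ Real.log G := by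
    calc _ ≤ ∑ p, (w p * Real.log G + (g p / G - w p)) := Finset.sum_le_sum fun p _ => key p
      _ = Real.log G + ((∑ p, g p) / G - 1) := by
        rw [Finset.sum_add_distrib, Finset.sum_sub_distrib, ← Finset.sum_mul, ← Finset.sum_div,
          hw1, one_mul]
      _ ≤ Real.log G := by
        have : (∑ p, g p) / G ≤ 1 := (div_le_one hG).2 hgG
        linarith
  simp only [Real.logb, ← mul_div_assoc]
  rw [← Finset.sum_div]
  exact div_le_div_of_nonneg_right hsum h2.le

end Elementary

/-! ### The joint distribution and its conditional independence -/

lemma jointP_nonneg {μ : 𝒳 × 𝒴 → ℝ} (hμ0 : ∀ p, 0 ≤ μ p)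
    {q : (Fin n → 𝒳) → (Fin n → 𝒴) → (Fin n → 𝒜) × (Fin n → ℬ) → ℝ}
    (hq0 : ∀ x y ab, 0 ≤ q x y ab) (s : Sample 𝒳 𝒴 𝒜 ℬ n) : 0 ≤ jointP μ q s :=
  mul_nonneg (mul_nonneg (Finset.prod_nonneg fun _ _ => hμ0 _) (hq0 _ _ _)) (by positivity)

lemma sum_jointP {μ : 𝒳 × 𝒴 → ℝ} (hμ1 : ∑ p, μ p = 1)
    {q : (Fin n → 𝒳) → (Fin n → 𝒴) → (Fin n → 𝒜) × (Fin n → ℬ) → ℝ}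
    (hq1 : ∀ x y, ∑ ab, q x y ab = 1) : ∑ s, jointP μ q s = 1 := by
  have hm : ∑ x : Fin n → 𝒳, ∑ y : Fin n → 𝒴, ∏ i, μ (x i, y i) = 1 := by
    have h : ∑ f : Fin n → 𝒳 × 𝒴, ∏ i, μ (f i) = 1 := by
      rw [← Fintype.prod_sum (fun (_ : Fin n) p => μ p)]
      simp [hμ1]
    rw [← h, ← Fintype.sum_prod_type']
    exact (Fintype.sum_equiv (Equiv.arrowProdEquivProdArrow (Fin n) (fun _ => 𝒳) (fun _ => 𝒴))
      _ _ fun f => rfl).symm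
  have hq : ∀ x y, ∑ a, ∑ b, q x y (a, b) = 1 := fun x y => by
    rw [← hq1 x y, Fintype.sum_prod_type]
  simp only [Fintype.sum_prod_type, jointP, Sample.x, Sample.y, Sample.a, Sample.b]
  simp only [← Finset.sum_mul, ← Finset.mul_sum, Finset.sum_const, nsmul_eq_mul, hq, mul_one]
  simp [hm]

/-- The part of the event `Ω = ω` that constrains Alice's questions. -/
def OmegaX {S : Finset (Fin n)} (ω : OmegaType 𝒳 𝒴 S) (x : Fin n → 𝒳) : Prop :=
  (∀ i v, ω.1 i = Sum.inl v → x i = v) ∧ ∀ i : {i : Fin n // i ∈ S}, x i.1 = ω.2.1 i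

/-- The part of the event `Ω = ω` that constrains Bob's questions. -/
def OmegaY {S : Finset (Fin n)} (ω : OmegaType 𝒳 𝒴 S) (y : Fin n → 𝒴) : Prop :=
  (∀ i v, ω.1 i = Sum.inr v → y i = v) ∧ ∀ i : {i : Fin n // i ∈ S}, y i.1 = ω.2.2 i

/-- The event `Ω = ω` fixes the coins and otherwise constrains the two question vectors
separately. -/
lemma omegaRV_eq_iff {S : Finset (Fin n)} (ω : OmegaType 𝒳 𝒴 S) (s : Sample 𝒳 𝒴 𝒜 ℬ n) :
    omegaRV S s = ω ↔ OmegaX ω s.x ∧ OmegaY ω s.y ∧ s.d = fun i => (ω.1 i).isLeft := by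
  obtain ⟨m, u, v⟩ := ω
  simp only [omegaRV, OmegaX, OmegaY, Prod.mk.injEq, funext_iff]
  constructor
  · rintro ⟨h1, h2, h3⟩
    refine ⟨⟨fun i w hw => ?_, h2⟩, ⟨fun i w hw => ?_, h3⟩, fun i => ?_⟩
    · have := h1 i; rw [hw] at this; split_ifs at this; exact Sum.inl.inj this
    · have := h1 i; rw [hw] at this; split_ifs at this; exact Sum.inr.inj this
    · rw [← h1 i]; cases s.d i <;> simp
  · rintro ⟨⟨h1, h2⟩, ⟨h3, h4⟩, h5⟩
    refine ⟨fun i => ?_, h2, h4⟩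
    rw [h5 i]
    cases hm : m i with
    | inl w => simp [h1 i w hm]
    | inr w => simp [h3 i w hm]

/-- The weight of the question vectors `(x, y)` restricted to the event `Ω = ω`. -/
def omegaWeight (μ : 𝒳 × 𝒴 → ℝ) {S : Finset (Fin n)} (ω : OmegaType 𝒳 𝒴 S)
    (x : Fin n → 𝒳) (y : Fin n → 𝒴) : ℝ :=
  if OmegaX ω x ∧ OmegaY ω y then (∏ i, μ (x i, y i)) * (1 / 2) ^ n else 0

/-- Given `Ω`, the two question vectors are independent: for every `i`, one of `X_i`, `Y_i` is
determined by `Ω`, so the restricted weight has rank one. -/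
lemma omegaWeight_exchange (μ : 𝒳 × 𝒴 → ℝ) {S : Finset (Fin n)} (ω : OmegaType 𝒳 𝒴 S)
    (x x' : Fin n → 𝒳) (y y' : Fin n → 𝒴) :
    omegaWeight μ ω x y * omegaWeight μ ω x' y' = omegaWeight μ ω x y' * omegaWeight μ ω x' y := by
  unfold omegaWeight
  by_cases hx : OmegaX ω x <;> by_cases hx' : OmegaX ω x' <;> by_cases hy : OmegaY ω y <;>
    by_cases hy' : OmegaY ω y' <;> simp only [hx, hx', hy, hy', and_self, and_true, and_false,
      if_true, if_false, mul_zero, zero_mul]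
  rw [mul_mul_mul_comm, mul_mul_mul_comm (∏ i, μ (x i, y' i)), ← Finset.prod_mul_distrib,
    ← Finset.prod_mul_distrib]
  congr 1
  refine Finset.prod_congr rfl fun i _ => ?_
  cases hm : ω.1 i with
  | inl v => rw [hx.1 i v hm, hx'.1 i v hm, mul_comm]
  | inr v => rw [hy.1 i v hm, hy'.1 i v hm]

/-- Probability of an event on `(X, A)` and `Y` jointly with `Ω = ω`; no-signaling makes Alice's
answer law independent of `y`, so it may be evaluated at any fixed `y₀`. -/
lemma pr_omega_and (μ : 𝒳 × 𝒴 → ℝ)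
    (q : (Fin n → 𝒳) → (Fin n → 𝒴) → (Fin n → 𝒜) × (Fin n → ℬ) → ℝ)
    (hNSA : ∀ x y y' a, (∑ b, q x y (a, b)) = ∑ b, q x y' (a, b))
    {S : Finset (Fin n)} (ω : OmegaType 𝒳 𝒴 S) (y₀ : Fin n → 𝒴)
    (G : (Fin n → 𝒳) → (Fin n → 𝒜) → Prop) (H : (Fin n → 𝒴) → Prop) :
    pr (jointP μ q) (fun s => omegaRV S s = ω ∧ G s.x s.a ∧ H s.y) =
      ∑ x, ∑ y, omegaWeight μ ω x y * (if H y then 1 else 0) *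
        ∑ a, if G x a then ∑ b, q x y₀ (a, b) else 0 := by
  unfold pr
  simp only [omegaRV_eq_iff]
  simp only [Fintype.sum_prod_type, jointP, Sample.x, Sample.y, Sample.a, Sample.b, Sample.d]
  refine Finset.sum_congr rfl fun x _ => Finset.sum_congr rfl fun y _ => ?_
  rw [Finset.mul_sum]
  refine Finset.sum_congr rfl fun a _ => ?_
  rw [hNSA x y₀ y a]
  unfold omegaWeight
  by_cases hx : OmegaX ω x <;> by_cases hy : OmegaY ω y <;> by_cases hG : G x a <;>
    by_cases hH : H y <;> simp [hx, hy, hG, hH]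
  rw [Finset.mul_sum]
  exact Finset.sum_congr rfl fun b _ => by ring

/-- Given `Ω = ω`, the pair `(X, A)` is independent of `Y`. -/
lemma pr_omega_condIndep (μ : 𝒳 × 𝒴 → ℝ)
    (q : (Fin n → 𝒳) → (Fin n → 𝒴) → (Fin n → 𝒜) × (Fin n → ℬ) → ℝ)
    (hq1 : ∀ x y, ∑ ab, q x y ab = 1)
    (hNSA : ∀ x y y' a, (∑ b, q x y (a, b)) = ∑ b, q x y' (a, b))
    {S : Finset (Fin n)} (ω : OmegaType 𝒳 𝒴 S)
    (G : (Fin n → 𝒳) → (Fin n → 𝒜) → Prop) (y : Fin n → 𝒴) :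
    pr (jointP μ q) (fun s => s.y = y ∧ omegaRV S s = ω) *
        pr (jointP μ q) (fun s => omegaRV S s = ω ∧ G s.x s.a) =
      pr (jointP μ q) (fun s => omegaRV S s = ω) *
        pr (jointP μ q) (fun s => omegaRV S s = ω ∧ G s.x s.a ∧ s.y = y) := by
  have hq : ∀ x y, ∑ a, ∑ b, q x y (a, b) = 1 := fun x y => by
    rw [← hq1 x y, Fintype.sum_prod_type]
  have e1 := pr_omega_and μ q hNSA ω y (fun _ _ => True) (fun y' => y' = y)
  have e2 := pr_omega_and μ q hNSA ω y G (fun _ => True)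
  have e3 := pr_omega_and μ q hNSA ω y (fun _ _ => True) (fun _ => True)
  have e4 := pr_omega_and μ q hNSA ω y G (fun y' => y' = y)
  simp only [if_true, mul_one, true_and, and_true, hq, mul_ite, mul_zero, ite_mul, zero_mul,
    Finset.sum_ite_eq', Finset.mem_univ] at e1 e2 e3 e4
  rw [e2, e3, e4, pr_congr (F := fun s => omegaRV S s = ω ∧ s.y = y) (fun s => and_comm), e1]
  rw [Finset.sum_mul_sum, Finset.sum_mul_sum]
  refine Finset.sum_congr rfl fun x' _ => Finset.sum_congr rfl fun x _ => ?_
  rw [Finset.mul_sum, Finset.sum_mul]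
  refine Finset.sum_congr rfl fun y' _ => ?_
  rw [← mul_assoc, ← mul_assoc, omegaWeight_exchange]

/-- The key divergence bound from the proof of the paper's Lemma 3.5: with `W = W_S^{≥1-τ}`,
`E_{(ω, x_T, a_{S∪T}, b_S) ∼ P|W} D( P_{Y A_{-(S∪T)} | ω, x_T, a_{S∪T}, b_S, W} ∥
  P_{Y | ω} · P_{A_{-(S∪T)} | ω, x_T, a_{S∪T}} )
  ≤ log₂(1/P(W)) + (|S| + |T|)·log₂|𝒜| + |S|·log₂|ℬ|`. -/
theorem key_divergence_bound
    {𝒳 𝒴 𝒜 ℬ : Type*} [Fintype 𝒳] [Fintype 𝒴] [Fintype 𝒜] [Fintype ℬ] {n : ℕ}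
    (μ : 𝒳 × 𝒴 → ℝ) (hμ0 : ∀ p, 0 ≤ μ p) (hμ1 : ∑ p, μ p = 1)
    (q : (Fin n → 𝒳) → (Fin n → 𝒴) → (Fin n → 𝒜) × (Fin n → ℬ) → ℝ)
    (hq0 : ∀ x y ab, 0 ≤ q x y ab) (hq1 : ∀ x y, ∑ ab, q x y ab = 1)
    (hNSA : ∀ x y y' a, (∑ b, q x y (a, b)) = ∑ b, q x y' (a, b))
    (hNSB : ∀ x x' y b, (∑ a, q x y (a, b)) = ∑ a, q x' y (a, b))
    (V : 𝒳 → 𝒴 → 𝒜 → ℬ → Prop)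
    (S : Finset (Fin n)) (τ : ℝ) (hτ0 : 0 ≤ τ) (hτ1 : τ ≤ 1)
    (hW : 0 < pr (jointP μ q) (winS V S τ))
    (T : Finset (Fin n)) (hTS : Disjoint T S) :
    (∑ p : OmegaType 𝒳 𝒴 S × ({i : Fin n // i ∈ T} → 𝒳) ×
        ({i : Fin n // i ∈ S ∪ T} → 𝒜) × ({i : Fin n // i ∈ S} → ℬ),
        condDist (jointP μ q)
            (fun s => (omegaRV S s, (fun i : {i : Fin n // i ∈ T} => s.x i.1),
              (fun i : {i : Fin n // i ∈ S ∪ T} => s.a i.1),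
              (fun i : {i : Fin n // i ∈ S} => s.b i.1)))
            (winS V S τ) p *
          klDiv
            (condDist (jointP μ q)
              (fun s => (s.y, fun i : {i : Fin n // i ∉ S ∪ T} => s.a i.1))
              (fun s => omegaRV S s = p.1 ∧
                (fun i : {i : Fin n // i ∈ T} => s.x i.1) = p.2.1 ∧
                (fun i : {i : Fin n // i ∈ S ∪ T} => s.a i.1) = p.2.2.1 ∧
                (fun i : {i : Fin n // i ∈ S} => s.b i.1) = p.2.2.2 ∧ winS V S τ s))
            (fun z : (Fin n → 𝒴) × ({i : Fin n // i ∉ S ∪ T} → 𝒜) =>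
              condDist (jointP μ q) (fun s => s.y) (fun s => omegaRV S s = p.1) z.1 *
                condDist (jointP μ q)
                  (fun s => fun i : {i : Fin n // i ∉ S ∪ T} => s.a i.1)
                  (fun s => omegaRV S s = p.1 ∧
                    (fun i : {i : Fin n // i ∈ T} => s.x i.1) = p.2.1 ∧
                    (fun i : {i : Fin n // i ∈ S ∪ T} => s.a i.1) = p.2.2.1)
                  z.2))
      ≤ Real.logb 2 (1 / pr (jointP μ q) (winS V S τ)) +
          ((S.card : ℝ) + (T.card : ℝ)) * Real.logb 2 (Fintype.card 𝒜 : ℝ) +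
          (S.card : ℝ) * Real.logb 2 (Fintype.card ℬ : ℝ) := by
  have hP0 := jointP_nonneg (n := n) hμ0 hq0
  have hP1 := sum_jointP (n := n) hμ1 hq1
  have hind := fun ω G y => pr_omega_condIndep (S := S) μ q hq1 hNSA ω G y
  generalize hPdef : jointP μ q = P at *
  generalize hwin : winS V S τ = W at *
  set PW := pr P W with hPW
  -- `K p` is the event fixing `Ω, X_T, A_{S∪T}`; `E p` also fixes `B_S` and includes `W`.
  let K : OmegaType 𝒳 𝒴 S × ({i : Fin n // i ∈ T} → 𝒳) ×
        ({i : Fin n // i ∈ S ∪ T} → 𝒜) × ({i : Fin n // i ∈ S} → ℬ) →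
        Sample 𝒳 𝒴 𝒜 ℬ n → Prop := fun p s => omegaRV S s = p.1 ∧
    (fun i : {i : Fin n // i ∈ T} => s.x i.1) = p.2.1 ∧
    (fun i : {i : Fin n // i ∈ S ∪ T} => s.a i.1) = p.2.2.1
  let E : OmegaType 𝒳 𝒴 S × ({i : Fin n // i ∈ T} → 𝒳) ×
        ({i : Fin n // i ∈ S ∪ T} → 𝒜) × ({i : Fin n // i ∈ S} → ℬ) →
        Sample 𝒳 𝒴 𝒜 ℬ n → Prop := fun p s => omegaRV S s = p.1 ∧
    (fun i : {i : Fin n // i ∈ T} => s.x i.1) = p.2.1 ∧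
    (fun i : {i : Fin n // i ∈ S ∪ T} => s.a i.1) = p.2.2.1 ∧
    (fun i : {i : Fin n // i ∈ S} => s.b i.1) = p.2.2.2 ∧ W s
  have hEK : ∀ p s, E p s → K p s := fun p s h => ⟨h.1, h.2.1, h.2.2.1⟩
  have hE : ∀ p, condDist P
      (fun s => (omegaRV S s, (fun i : {i : Fin n // i ∈ T} => s.x i.1),
        (fun i : {i : Fin n // i ∈ S ∪ T} => s.a i.1),
        (fun i : {i : Fin n // i ∈ S} => s.b i.1))) W p = pr P (E p) / PW := by
    intro p
    unfold condDist
    congr 1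
    refine pr_congr fun s => ?_
    simp only [E, Prod.ext_iff, and_assoc]
  have hw1 : ∑ p, pr P (E p) / PW = 1 := by
    simp only [← hE, condDist]
    rw [← Finset.sum_div, sum_pr_and]
    exact div_self hW.ne'
  have hKsum : ∑ p, pr P (K p) = (Fintype.card ℬ : ℝ) ^ S.card := by
    have h1 := sum_pr_eq (P := P) (fun s => (omegaRV S s,
      (fun i : {i : Fin n // i ∈ T} => s.x i.1), (fun i : {i : Fin n // i ∈ S ∪ T} => s.a i.1)))
    rw [hP1] at h1
    simp only [Prod.mk.injEq, Fintype.sum_prod_type] at h1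
    simp only [K, Fintype.sum_prod_type, Finset.sum_const, nsmul_eq_mul, ← Finset.mul_sum]
    rw [h1]
    simp
  have hterm : ∀ p, pr P (E p) / PW * klDiv
      (condDist P (fun s => (s.y, fun i : {i : Fin n // i ∉ S ∪ T} => s.a i.1)) (E p))
      (fun z : (Fin n → 𝒴) × ({i : Fin n // i ∉ S ∪ T} → 𝒜) =>
        condDist P (fun s => s.y) (fun s => omegaRV S s = p.1) z.1 *
          condDist P (fun s => fun i : {i : Fin n // i ∉ S ∪ T} => s.a i.1) (K p) z.2) ≤
      pr P (E p) / PW * Real.logb 2 (pr P (K p) / pr P (E p)) := by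
    intro p
    rcases (pr_nonneg hP0 (E p)).eq_or_lt with h0 | hpos
    · simp [← h0]
    refine mul_le_mul_of_nonneg_left (klDiv_le_logb _ _ _ ?_ ?_ ?_) (by positivity)
    · exact fun z => div_nonneg (pr_nonneg hP0 _) hpos.le
    · simp only [condDist]
      rw [← Finset.sum_div, sum_pr_and, div_self hpos.ne']
    · rintro ⟨y, a'⟩ hz
      simp only [condDist] at hz ⊢
      set N := pr P (fun s => (s.y, fun i : {i : Fin n // i ∉ S ∪ T} => s.a i.1) = (y, a') ∧ E p s)
        with hN
      have hN0 : 0 < N := lt_of_le_of_ne (pr_nonneg hP0 _) fun h => hz (by rw [← h, zero_div])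
      have hi := hind p.1 (fun x a => (fun i : {i : Fin n // i ∉ S ∪ T} => a i.1) = a' ∧
        (fun i : {i : Fin n // i ∈ T} => x i.1) = p.2.1 ∧
        (fun i : {i : Fin n // i ∈ S ∪ T} => a i.1) = p.2.2.1) y
      have hA : pr P (fun s => (fun i : {i : Fin n // i ∉ S ∪ T} => s.a i.1) = a' ∧ K p s) =
          pr P (fun s => omegaRV S s = p.1 ∧
            (fun i : {i : Fin n // i ∉ S ∪ T} => s.a i.1) = a' ∧
            (fun i : {i : Fin n // i ∈ T} => s.x i.1) = p.2.1 ∧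
            (fun i : {i : Fin n // i ∈ S ∪ T} => s.a i.1) = p.2.2.1) :=
        pr_congr fun s => and_left_comm
      rw [← hA] at hi
      set J := pr P (fun s => omegaRV S s = p.1 ∧
        ((fun i : {i : Fin n // i ∉ S ∪ T} => s.a i.1) = a' ∧
        (fun i : {i : Fin n // i ∈ T} => s.x i.1) = p.2.1 ∧
        (fun i : {i : Fin n // i ∈ S ∪ T} => s.a i.1) = p.2.2.1) ∧ s.y = y) with hJ
      have hNJ : N ≤ J := pr_mono hP0 fun s hs =>
        ⟨hs.2.1, ⟨congrArg Prod.snd hs.1, hs.2.2.1, hs.2.2.2.1⟩, congrArg Prod.fst hs.1⟩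
      have hJ0 : 0 < J := hN0.trans_le hNJ
      have hK0 : 0 < pr P (K p) := hpos.trans_le (pr_mono hP0 (hEK p))
      have hΩ0 : 0 < pr P (fun s => omegaRV S s = p.1) :=
        hK0.trans_le (pr_mono hP0 fun s hs => hs.1)
      have hg : pr P (fun s => s.y = y ∧ omegaRV S s = p.1) / pr P (fun s => omegaRV S s = p.1) *
          (pr P (fun s => (fun i : {i : Fin n // i ∉ S ∪ T} => s.a i.1) = a' ∧ K p s) /
            pr P (K p)) = J / pr P (K p) := by
        rw [div_mul_div_comm, hi, mul_div_mul_left _ _ hΩ0.ne']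
      rw [hg]
      refine ⟨by positivity, ?_⟩
      rw [div_div_div_eq, div_le_div_iff₀ (by positivity) hpos]
      nlinarith [mul_le_mul_of_nonneg_right hNJ (mul_pos hK0 hpos).le]
  have hcard : (0 : ℝ) < (Fintype.card ℬ : ℝ) ^ S.card := by
    rw [← hKsum]
    refine lt_of_lt_of_le hW ?_
    have : PW = ∑ p, pr P (E p) := by
      rw [← Finset.sum_div, div_eq_one_iff_eq hW.ne'] at hw1
      exact hw1.symm
    rw [this]
    exact Finset.sum_le_sum fun p _ => pr_mono hP0 (hEK p)
  have hgibbs := sum_mul_logb_div_le (fun p => pr P (E p) / PW) (fun p => pr P (K p)) _ hcard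
    (fun p => div_nonneg (pr_nonneg hP0 _) hW.le) hw1 (fun p => pr_nonneg hP0 _) hKsum.le
    (fun p hp => lt_of_lt_of_le
      (lt_of_le_of_ne (pr_nonneg hP0 (E p)) fun h => hp (by simp [← h]))
      (pr_mono hP0 (hEK p)))
  rw [Real.logb_pow] at hgibbs
  have hA0 : 0 ≤ ((S.card : ℝ) + (T.card : ℝ)) * Real.logb 2 (Fintype.card 𝒜 : ℝ) := by
    refine mul_nonneg (by positivity) ?_
    -- an empty `𝒜` gives the junk value `logb 2 0 = 0`
    rcases Nat.eq_zero_or_pos (Fintype.card 𝒜) with h | h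
    · simp [h]
    · exact Real.logb_nonneg (by norm_num) (by exact_mod_cast h)
  have hsplit : ∀ p, pr P (E p) / PW * Real.logb 2 (pr P (K p) / pr P (E p)) =
      pr P (E p) / PW * Real.logb 2 (1 / PW) +
        pr P (E p) / PW * Real.logb 2 (pr P (K p) / (pr P (E p) / PW)) := by
    intro p
    rcases (pr_nonneg hP0 (E p)).eq_or_lt with h0 | hpos
    · simp [← h0]
    have hK0 : 0 < pr P (K p) := hpos.trans_le (pr_mono hP0 (hEK p))
    rw [← mul_add, ← Real.logb_mul (by positivity) (by positivity)]
    congr 2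
    field_simp
  simp only [hE]
  refine (Finset.sum_le_sum fun p _ => hterm p).trans ?_
  rw [Finset.sum_congr rfl fun p _ => hsplit p, Finset.sum_add_distrib, ← Finset.sum_mul, hw1,
    one_mul]
  linarith

end
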